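/- For every positive integer m and every real x, the m-th derivative of the harmonic based exponential function is given by (d/dx)^m ₕe(x) = h_m + ∑_{n=1}^∞ h_{n+m} x^n / n!. -/

import Mathlib

open Real MeasureTheory

/-- The `n`-th harmonic number `h_n = ∑_{r=1}^n 1/r`. -/
noncomputable def harm (n : ℕ) : ℝ := ∑ r ∈ Finset.range n, 1 / (r + 1 : ℝ)

/-- The harmonic based exponential function `ₕe(x) = 1 + ∑_{n=1}^∞ h_n x^n / n!`. -/
noncomputable def he (x : ℝ) : ℝ :=
  1 + ∑' n : ℕ, harm (n + 1) * x ^ (n + 1) / (Nat.factorial (n + 1) : ℝ)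

/-!
Differentiating an exponential generating function `∑ aₙ xⁿ / n!` shifts its coefficients. Since
`h₀ = 0`, the function `ₕe - 1` is the exponential generating function of the harmonic numbers, so
its `m`-th derivative is that of `n ↦ hₙ₊ₘ`.
-/

section ExpGenFun

open scoped Nat

lemma succ_mul_div_factorial_succ {K : Type*} [Field K] [CharZero K] (n : ℕ) (c : K) :
    (n + 1 : ℕ) * c / (n + 1)! = c / n ! := by
  rw [Nat.factorial_succ, Nat.cast_mul, mul_div_mul_left _ _ (Nat.cast_ne_zero.2 n.succ_ne_zero)]

lemma hasDerivAt_pow_succ_div_factorial {𝕜 : Type*} [NontriviallyNormedField 𝕜] [CharZero 𝕜]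
    (n : ℕ) (x : 𝕜) : HasDerivAt (fun y : 𝕜 ↦ y ^ (n + 1) / (n + 1)!) (x ^ n / n !) x :=
  ((hasDerivAt_pow (n + 1) x).div_const _).congr_deriv (succ_mul_div_factorial_succ n (x ^ n))

/-- The exponential generating function `x ↦ ∑ aₙ xⁿ / n!` of a sequence of vectors `a`; its value
is `0` wherever the series does not converge unconditionally. -/
noncomputable def expGenFun {𝕜 E : Type*} [NormedField 𝕜] [NormedAddCommGroup E] [NormedSpace 𝕜 E]
    (a : ℕ → E) (x : 𝕜) : E :=
  ∑' n, (x ^ n / n !) • a n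

/-- The exponential generating function of `a` has infinite radius of convergence: it converges
absolutely at every point. Only the norms of the coefficients matter, so real arguments `r` suffice
whatever the scalar field. -/
def ExpSummable {E : Type*} [SeminormedAddCommGroup E] (a : ℕ → E) : Prop :=
  ∀ r : ℝ, Summable fun n ↦ r ^ n / n ! * ‖a n‖

namespace ExpSummable

section Seminormed

variable {E : Type*} [SeminormedAddCommGroup E] {a : ℕ → E}

lemma of_norm_le_pow {c : ℝ} (h : ∀ n, ‖a n‖ ≤ c ^ n) : ExpSummable a := by
  intro r
  refine .of_norm_bounded (Real.summable_pow_div_factorial (|r| * c)) fun n ↦ ?_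
  calc ‖r ^ n / n ! * ‖a n‖‖ = |r| ^ n / n ! * ‖a n‖ := by simp
    _ ≤ |r| ^ n / n ! * c ^ n := by gcongr; exact h n
    _ = (|r| * c) ^ n / n ! := by ring

lemma comp_add_one (ha : ExpSummable a) : ExpSummable fun n ↦ a (n + 1) := by
  intro r
  refine .of_norm_bounded ((summable_nat_add_iff 1).2 (ha (2 * (|r| + 1)))) fun n ↦ ?_
  have succ_le_two_pow : ((n + 1 : ℕ) : ℝ) ≤ 2 ^ (n + 1) := mod_cast Nat.lt_two_pow_self.le
  have pow_le_pow_succ : |r| ^ n ≤ (|r| + 1) ^ (n + 1) :=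
    (pow_le_pow_left₀ (abs_nonneg r) (by linarith) n).trans
      (pow_le_pow_right₀ (by linarith [abs_nonneg r]) n.le_succ)
  calc ‖r ^ n / n ! * ‖a (n + 1)‖‖
      = |r| ^ n / n ! * ‖a (n + 1)‖ := by simp
    _ = (n + 1 : ℕ) * |r| ^ n / (n + 1)! * ‖a (n + 1)‖ := by rw [succ_mul_div_factorial_succ]
    _ ≤ 2 ^ (n + 1) * (|r| + 1) ^ (n + 1) / (n + 1)! * ‖a (n + 1)‖ := by gcongr
    _ = (2 * (|r| + 1)) ^ (n + 1) / (n + 1)! * ‖a (n + 1)‖ := by rw [mul_pow]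

lemma comp_add_right (ha : ExpSummable a) (m : ℕ) : ExpSummable fun n ↦ a (n + m) := by
  induction m generalizing a with
  | zero => exact ha
  | succ _ ih => exact ih ha.comp_add_one

end Seminormed

variable {𝕜 E : Type*} [RCLike 𝕜] [NormedAddCommGroup E] [NormedSpace 𝕜 E] [CompleteSpace E]
  {a : ℕ → E}

lemma summable_smul (ha : ExpSummable a) (x : 𝕜) : Summable fun n ↦ (x ^ n / n ! : 𝕜) • a n :=
  .of_norm_bounded (ha ‖x‖) fun n ↦ by simp [norm_smul]

lemma expGenFun_eq_add_tsum (ha : ExpSummable a) (x : 𝕜) :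
    expGenFun a x = a 0 + ∑' n, (x ^ (n + 1) / (n + 1)! : 𝕜) • a (n + 1) := by
  simpa [expGenFun] using (ha.summable_smul x).tsum_eq_zero_add

theorem hasDerivAt_expGenFun (ha : ExpSummable a) (x : 𝕜) :
    HasDerivAt (expGenFun a) (expGenFun (fun n ↦ a (n + 1)) x) x := by
  have hasDerivAt_term (n : ℕ) (y : 𝕜) : HasDerivAt
      (fun z : 𝕜 ↦ (z ^ (n + 1) / (n + 1)! : 𝕜) • a (n + 1)) ((y ^ n / n ! : 𝕜) • a (n + 1)) y :=
    (hasDerivAt_pow_succ_div_factorial n y).smul_const _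
  have norm_term_le (n : ℕ) (y : 𝕜) (hy : y ∈ Metric.ball 0 (‖x‖ + 1)) :
      ‖(y ^ n / n ! : 𝕜) • a (n + 1)‖ ≤ (‖x‖ + 1) ^ n / n ! * ‖a (n + 1)‖ := by
    have norm_le : ‖y‖ ≤ ‖x‖ + 1 := (mem_ball_zero_iff.1 hy).le
    rw [norm_smul, norm_div, norm_pow, RCLike.norm_natCast]
    gcongr
  have mem_ball_self : x ∈ Metric.ball 0 (‖x‖ + 1) := by simp
  rw [funext ha.expGenFun_eq_add_tsum]
  exact .const_add _ <| hasDerivAt_tsum_of_isPreconnected (ha.comp_add_one (‖x‖ + 1))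
    Metric.isOpen_ball Metric.isPreconnected_ball (fun n y _ ↦ hasDerivAt_term n y) norm_term_le
    mem_ball_self ((summable_nat_add_iff 1).2 (ha.summable_smul x)) mem_ball_self

lemma deriv_expGenFun (ha : ExpSummable a) :
    deriv (expGenFun a : 𝕜 → E) = expGenFun fun n ↦ a (n + 1) :=
  funext fun x ↦ (ha.hasDerivAt_expGenFun x).deriv

theorem iteratedDeriv_expGenFun (ha : ExpSummable a) (m : ℕ) :
    iteratedDeriv m (expGenFun a : 𝕜 → E) = expGenFun fun n ↦ a (n + m) := by
  induction m generalizing a with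
  | zero => exact iteratedDeriv_zero
  | succ m ih => rw [iteratedDeriv_succ', ha.deriv_expGenFun, ih ha.comp_add_one]; rfl

end ExpSummable

end ExpGenFun

lemma harm_nonneg (n : ℕ) : 0 ≤ harm n := Finset.sum_nonneg fun _ _ ↦ by positivity

lemma harm_le_self (n : ℕ) : harm n ≤ n := by
  have one_div_le (r : ℕ) : 1 / (r + 1 : ℝ) ≤ 1 := by
    simpa using Nat.one_div_le_one_div (α := ℝ) r.zero_le
  simpa [harm] using Finset.sum_le_card_nsmul (Finset.range n) _ 1 fun r _ ↦ one_div_le r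

lemma expSummable_harm : ExpSummable harm := by
  refine .of_norm_le_pow (c := 2) fun n ↦ ?_
  calc ‖harm n‖ = harm n := Real.norm_of_nonneg (harm_nonneg n)
    _ ≤ n := harm_le_self n
    _ ≤ 2 ^ n := mod_cast Nat.lt_two_pow_self.le

lemma expGenFun_harm_add (m : ℕ) (x : ℝ) :
    expGenFun (fun n ↦ harm (n + m)) x =
      harm m + ∑' n : ℕ, harm (n + 1 + m) * x ^ (n + 1) / (Nat.factorial (n + 1) : ℝ) := by
  rw [(expSummable_harm.comp_add_right m).expGenFun_eq_add_tsum]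
  simp only [zero_add, smul_eq_mul, mul_comm, mul_div_assoc]

lemma he_eq_one_add_expGenFun : he = fun x ↦ 1 + expGenFun harm x := by
  funext x
  have harm_zero : harm 0 = 0 := Finset.sum_range_zero _
  simpa [he, harm_zero] using (expGenFun_harm_add 0 x).symm

/-- `(d/dx)^m ₕe(x) = h_m + ∑_{n=1}^∞ h_{n+m} x^n / n!`. -/
theorem he_iteratedDeriv (m : ℕ) (hm : 0 < m) (x : ℝ) :
    iteratedDeriv m he x =
      harm m + ∑' n : ℕ, harm (n + 1 + m) * x ^ (n + 1) / (Nat.factorial (n + 1) : ℝ) := by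
  rw [he_eq_one_add_expGenFun, iteratedDeriv_const_add hm,
    expSummable_harm.iteratedDeriv_expGenFun, expGenFun_harm_add]
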